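/- If ε : ℕ → ZMod 2 satisfies the Adem constraints and ε(2) = ε(3) = 0, then ε(r) = 0 for every natural number r ≥ 2 (so ε is the function which is 1 exactly at r = 1). -/

import Mathlib

/-!
Put `F = ∑ ε(n) Xⁿ ∈ F₂⟦X⟧`, so that `E ε s d = [X^d] F^s`. By induction on `k`, the support of `ε`
lies in `1 + qℕ` for every `q = 2^k`, and hence in `{1}`.

If the support lies in `1 + qℕ`, then `F = X (1 + X^q K)` with `K(0) = ε(q+1)`. In the Adem
relation with `s = q + 1` and `r = 2i - q`, the term of index `j < i` contains
`[X^(2i-2j)] (1 + X^q K)^(j+1)` with `0 < 2i - 2j ≤ q`. This is zero for `2i - 2j < q`; for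
`2i - 2j = q` it is `(j+1) K(0)`, which is zero because `q` is then even, so that `ε(j) ≠ 0` forces
`j` to be odd. Terms with `j > i` vanish for degree reasons, and what remains is
`ε(q+1) · E ε (q+2) (2i-q) = C(i-q-2, q) · ε(i)`.

* If `4 ∣ q` and `i = 2q + 1`, the right side is zero. Since
  `(1 + X^q K)^(q+2) = (1 + X^(2q) K²)^(q/2+1)` with `q/2 + 1` odd, the left side is `ε(q+1)²`.
  So `ε(q+1) = 0`; for `q = 1, 2` this is the hypothesis on `ε(2)`, `ε(3)`.
* If `q = 2^k` and `i = 1 + qm` with `m ≥ 3` odd, the left side is now zero, while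
  `C(i-q-2, q) ≡ m - 2` is odd by Lucas' theorem. So `ε(i) = 0`, and `q` can be doubled.
-/

/-- `E ε s d` is the sum over all `s`-tuples of naturals summing to `d` of the
products of the values of `ε`, in `ZMod 2`. -/
def E (ε : ℕ → ZMod 2) (s d : ℕ) : ZMod 2 :=
  ∑ f ∈ Finset.Nat.antidiagonalTuple s d, ∏ j, ε (f j)

/-- `ε` satisfies the Adem constraints encoding the Adem relations among the
Dyer-Lashof operations on `F₂[u]` with `Q^{2r} u = ε r • u^{r+1}`. -/
def AdemConstraints (ε : ℕ → ZMod 2) : Prop :=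
  ε 0 = 0 ∧ ε 1 = 1 ∧ ∀ s r : ℕ, r > 2 * s →
    ε s * E ε (s + 1) r =
      ∑ i ∈ (Finset.Icc (s + 1) (r - s - 1)).filter (fun i => r ≤ 2 * i),
        ((Nat.choose (i - s - 1) (2 * i - r) : ZMod 2) * ε i * E ε (i + 1) (r + s - i))

open PowerSeries

section

variable {R : Type*}

lemma coeff_mk_pow_eq_sum_antidiagonalTuple [CommSemiring R] (a : ℕ → R) (s d : ℕ) :
    coeff d (mk a ^ s) = ∑ f ∈ Finset.Nat.antidiagonalTuple s d, ∏ j, a (f j) := by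
  rw [← Fin.prod_const, coeff_prod]
  refine Finset.sum_equiv Finsupp.equivFunOnFinite (fun f => ?_) (fun f _ => ?_)
  · simp [Finset.mem_finsuppAntidiag, Finset.Nat.mem_antidiagonalTuple]
  · simp

lemma coeff_one_add_X_pow_mul_pow [CommSemiring R] (K : R⟦X⟧) {n q : ℕ} (hn : n ≠ 0)
    (hnq : n ≤ q) (s : ℕ) :
    coeff n ((1 + X ^ q * K) ^ s) = if n = q then s * constantCoeff K else 0 := by
  induction s with
  | zero => simp [coeff_one, hn]
  | succ s ih =>
    rw [pow_succ, mul_add, mul_one, map_add, ih, mul_left_comm, coeff_X_pow_mul']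
    rcases hnq.eq_or_lt with rfl | hlt
    · simp [hn, add_mul]
    · simp [hlt.ne, hlt.not_ge]

lemma one_add_X_pow_mul_sq [CommSemiring R] [CharP R 2] (K : R⟦X⟧) (q : ℕ) :
    (1 + X ^ q * K) ^ 2 = 1 + X ^ (2 * q) * K ^ 2 := by
  have : CharP R⟦X⟧ 2 := charP_of_injective_ringHom (f := (C : R →+* R⟦X⟧)) C_injective 2
  rw [CharTwo.add_sq, one_pow, mul_pow, ← pow_mul, mul_comm q]

/-- The generating series `∑ a (n + m) Xⁿ` of the sequence `a` with its first `m` terms dropped: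
if these vanish, the quotient by `X ^ m` of the generating series of `a`. -/
def tailSeries (a : ℕ → R) (m : ℕ) : R⟦X⟧ := mk fun n => a (n + m)

lemma constantCoeff_tailSeries [Semiring R] (a : ℕ → R) (m : ℕ) :
    constantCoeff (tailSeries a m) = a m := by
  rw [← coeff_zero_eq_constantCoeff_apply, tailSeries, coeff_mk, zero_add]

lemma mk_eq_X_mul_tailSeries_one [Semiring R] {a : ℕ → R} (h0 : a 0 = 0) :
    mk a = X * tailSeries a 1 := by
  simpa [tailSeries, h0] using eq_X_mul_shift_add_const (mk a)

/-- The sequence `a` vanishes outside the arithmetic progression `1, 1 + q, 1 + 2q, …`, the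
invariant whose modulus is doubled repeatedly. It is stated without congruences so that `a 0 = 0`
even for `q = 1`. -/
def SupportedOneMod [Zero R] (a : ℕ → R) (q : ℕ) : Prop :=
  ∀ i, a i ≠ 0 → ∃ m, i = q * m + 1

lemma SupportedOneMod.tailSeries_one_eq [Semiring R] {a : ℕ → R} {q : ℕ}
    (ha : SupportedOneMod a q) (h1 : a 1 = 1) (hq : 0 < q) :
    tailSeries a 1 = 1 + X ^ q * tailSeries a (q + 1) := by
  ext n
  rw [map_add, coeff_X_pow_mul', coeff_one, tailSeries, tailSeries, coeff_mk, coeff_mk]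
  rcases Nat.eq_zero_or_pos n with rfl | hn
  · simp [h1, hq.ne']
  rw [if_neg hn.ne', zero_add]
  split_ifs with hqn
  · rw [← add_assoc, Nat.sub_add_cancel hqn]
  · by_contra hne
    obtain ⟨m, hm⟩ := ha _ hne
    have hnm : n = q * m := by omega
    exact hqn (Nat.le_of_dvd hn ⟨m, hnm⟩)

end

lemma choose_prime_pow_modEq_div (p : ℕ) [Fact p.Prime] (n k : ℕ) :
    n.choose (p ^ k) ≡ n / p ^ k [MOD p] := by
  induction k generalizing n with
  | zero => simp [Nat.ModEq.refl]
  | succ k ih =>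
    have hp : 0 < p := (Fact.out : p.Prime).pos
    have lucas := Choose.choose_modEq_choose_mod_mul_choose_div_nat (p := p) (n := n)
      (k := p ^ (k + 1))
    rw [pow_succ, Nat.mul_mod_left, Nat.choose_zero_right, one_mul,
      Nat.mul_div_cancel _ hp] at lucas
    rw [pow_succ, mul_comm (p ^ k), ← Nat.div_div_eq_div_mul, mul_comm p]
    exact lucas.trans (ih (n / p))

section

variable {ε : ℕ → ZMod 2} {q : ℕ}

lemma E_eq_coeff_mk_pow (ε : ℕ → ZMod 2) (s d : ℕ) : E ε s d = coeff d (mk ε ^ s) :=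
  (coeff_mk_pow_eq_sum_antidiagonalTuple ε s d).symm

lemma E_add_eq_coeff_tailSeries_pow (h0 : ε 0 = 0) (s n : ℕ) :
    E ε s (n + s) = coeff n (tailSeries ε 1 ^ s) := by
  rw [E_eq_coeff_mk_pow, mk_eq_X_mul_tailSeries_one h0, mul_pow, coeff_X_pow_mul]

lemma E_self (h0 : ε 0 = 0) (s : ℕ) : E ε s s = ε 1 ^ s := by
  simpa [constantCoeff_tailSeries] using E_add_eq_coeff_tailSeries_pow h0 s 0

lemma E_eq_zero_of_lt (h0 : ε 0 = 0) {s d : ℕ} (h : d < s) : E ε s d = 0 := by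
  rw [E_eq_coeff_mk_pow, mk_eq_X_mul_tailSeries_one h0, mul_pow, coeff_X_pow_mul',
    if_neg h.not_ge]

namespace SupportedOneMod

lemma apply_zero (h : SupportedOneMod ε q) : ε 0 = 0 := by
  by_contra hne
  obtain ⟨m, hm⟩ := h 0 hne
  omega

lemma E_add_eq_coeff (h : SupportedOneMod ε q) (h1 : ε 1 = 1) (hq : 0 < q) (s n : ℕ) :
    E ε s (n + s) = coeff n ((1 + X ^ q * tailSeries ε (q + 1)) ^ s) := by
  rw [E_add_eq_coeff_tailSeries_pow h.apply_zero, h.tailSeries_one_eq h1 hq]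

lemma E_two_mul_add (h : SupportedOneMod ε q) (h1 : ε 1 = 1) (hq : 0 < q) (hq4 : 4 ∣ q) :
    E ε (q + 2) (2 * q + (q + 2)) = ε (q + 1) := by
  obtain ⟨t, rfl⟩ := hq4
  have hpow : 4 * t + 2 = 2 * (2 * t + 1) := by ring
  have hodd : ((2 * t + 1 : ℕ) : ZMod 2) = 1 :=
    ZMod.natCast_eq_one_iff_odd.2 (odd_two_mul_add_one t)
  rw [h.E_add_eq_coeff h1 hq, hpow, pow_mul, one_add_X_pow_mul_sq,
    coeff_one_add_X_pow_mul_pow _ (by omega) le_rfl, if_pos rfl, hodd, one_mul, map_pow,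
    constantCoeff_tailSeries, ZMod.pow_card]

lemma mul_E_eq_zero (h : SupportedOneMod ε q) (h1 : ε 1 = 1) (hq : 0 < q) {i j d : ℕ}
    (hji : j ≠ i) (hd : d + j = 2 * i + 1) (hij : 2 * i ≤ 2 * j + q) :
    ε j * E ε (j + 1) d = 0 := by
  rcases hji.lt_or_gt with hlt | hgt
  · by_cases hεj : ε j = 0
    · rw [hεj, zero_mul]
    have hd' : d = 2 * (i - j) + (j + 1) := by omega
    rw [hd', h.E_add_eq_coeff h1 hq, coeff_one_add_X_pow_mul_pow _ (by omega) (by omega)]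
    split_ifs with hq_eq
    · obtain ⟨m, hm⟩ := h j hεj
      have hq_even : Even q := hq_eq ▸ even_two_mul (i - j)
      have heven : Even (j + 1) := hm ▸ (hq_even.mul_right m).add even_two
      rw [ZMod.natCast_eq_zero_iff_even.2 heven, zero_mul, mul_zero]
    · rw [mul_zero]
  · rw [E_eq_zero_of_lt h.apply_zero (by omega), mul_zero]

end SupportedOneMod

end

namespace AdemConstraints

variable {ε : ℕ → ZMod 2} {q : ℕ}

lemma relation_of_supportedOneMod (hε : AdemConstraints ε) (h : SupportedOneMod ε q) (hq : 0 < q)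
    {i : ℕ} (hi : 3 * q + 2 < 2 * i) :
    ε (q + 1) * E ε (q + 2) (2 * i - q) = (i - (q + 2)).choose q * ε i := by
  obtain ⟨h0, h1, hrel⟩ := hε
  rw [hrel (q + 1) (2 * i - q) (by omega), Finset.sum_eq_single i]
  · have hchoose : 2 * i - (2 * i - q) = q := by omega
    have hdeg : 2 * i - q + (q + 1) - i = i + 1 := by omega
    rw [hchoose, hdeg, E_self h0, h1, one_pow, mul_one, Nat.sub_sub]
  · intro j hj hji
    rw [Finset.mem_filter, Finset.mem_Icc] at hj
    rw [mul_assoc, h.mul_E_eq_zero h1 hq hji (by omega) (by omega), mul_zero]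
  · intro hout
    rw [Finset.mem_filter, Finset.mem_Icc] at hout
    -- `i` is out of range only if `i < 2q + 2`, and then the binomial coefficient vanishes.
    rw [Nat.choose_eq_zero_of_lt (by omega), Nat.cast_zero, zero_mul, zero_mul]

lemma apply_add_one_eq_zero (hε : AdemConstraints ε) (h : SupportedOneMod ε q) (hq : 0 < q)
    (hq4 : 4 ∣ q) : ε (q + 1) = 0 := by
  have hrel := hε.relation_of_supportedOneMod h hq (i := 2 * q + 1) (by omega)
  have hr : 2 * (2 * q + 1) - q = 2 * q + (q + 2) := by omega
  rw [hr, h.E_two_mul_add hε.2.1 hq hq4, Nat.choose_eq_zero_of_lt (by omega), Nat.cast_zero,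
    zero_mul] at hrel
  exact mul_self_eq_zero.1 hrel

lemma apply_two_pow_mul_odd_add_one (hε : AdemConstraints ε) {k : ℕ}
    (h : SupportedOneMod ε (2 ^ k)) (hk : ε (2 ^ k + 1) = 0) (n : ℕ) :
    ε (2 ^ k * (2 * n + 1) + 1) = 0 := by
  rcases n with _ | n
  · simpa using hk
  have hpos : 0 < 2 ^ k := by positivity
  have hmul : 2 ^ k * (2 * (n + 1) + 1) = 2 ^ k * (2 * n + 1) + 2 * 2 ^ k := by ring
  have hge : 2 ^ k ≤ 2 ^ k * (2 * n + 1) := Nat.le_mul_of_pos_right _ (by omega)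
  have hrel := hε.relation_of_supportedOneMod h hpos
    (i := 2 ^ k * (2 * (n + 1) + 1) + 1) (by omega)
  have htop : 2 ^ k * (2 * (n + 1) + 1) + 1 - (2 ^ k + 2)
      = 2 ^ k - 1 + 2 ^ k * (2 * n + 1) := by omega
  have hdiv : (2 ^ k - 1 + 2 ^ k * (2 * n + 1)) / 2 ^ k = 2 * n + 1 := by
    rw [Nat.add_mul_div_left _ _ hpos, Nat.div_eq_of_lt (by omega), zero_add]
  have hchoose : (((2 ^ k - 1 + 2 ^ k * (2 * n + 1)).choose (2 ^ k) : ℕ) : ZMod 2) = 1 := by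
    rw [(ZMod.natCast_eq_natCast_iff _ _ _).2 (choose_prime_pow_modEq_div 2 _ k), hdiv]
    exact ZMod.natCast_eq_one_iff_odd.2 (odd_two_mul_add_one n)
  rw [hk, zero_mul, htop, hchoose, one_mul] at hrel
  exact hrel.symm

lemma supportedOneMod_two_pow_succ (hε : AdemConstraints ε) {k : ℕ}
    (h : SupportedOneMod ε (2 ^ k)) (hk : ε (2 ^ k + 1) = 0) :
    SupportedOneMod ε (2 ^ (k + 1)) := by
  intro i hi
  obtain ⟨m, rfl⟩ := h i hi
  rcases m.even_or_odd' with ⟨n, rfl | rfl⟩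
  · exact ⟨n, by ring⟩
  · exact absurd (hε.apply_two_pow_mul_odd_add_one h hk n) hi

lemma supportedOneMod_two_pow (hε : AdemConstraints ε) (h2 : ε 2 = 0) (h3 : ε 3 = 0) (k : ℕ) :
    SupportedOneMod ε (2 ^ k) := by
  induction k with
  | zero =>
    intro i hi
    have hi0 : i ≠ 0 := fun h => hi (h ▸ hε.1)
    exact ⟨i - 1, by omega⟩
  | succ k ih =>
    refine hε.supportedOneMod_two_pow_succ ih ?_
    match k with
    | 0 => exact h2
    | 1 => exact h3
    | k + 2 => exact hε.apply_add_one_eq_zero ih (by positivity) ⟨2 ^ k, by ring⟩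

end AdemConstraints

theorem stmt_3 (ε : ℕ → ZMod 2) (hε : AdemConstraints ε) (h2 : ε 2 = 0)
    (h3 : ε 3 = 0) : ∀ r : ℕ, 2 ≤ r → ε r = 0 := by
  intro r hr
  by_contra hne
  obtain ⟨m, hm⟩ := hε.supportedOneMod_two_pow h2 h3 r r hne
  have hdvd : 2 ^ r ∣ r - 1 := ⟨m, by omega⟩
  have hle : 2 ^ r ≤ r - 1 := Nat.le_of_dvd (by omega) hdvd
  have hlt : r < 2 ^ r := Nat.lt_two_pow_self
  omega
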